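/- Representation of the Caputo-type general fractional derivative for differentiable functions: let k ∈ C_{-1}(0,∞) and f ∈ C¹_{-1}(0,∞). Then for every t > 0 the function k * f is differentiable at t and d/dt (k * f)(t) = (k * f′)(t) + f(0) k(t), where f(0) = lim_{s→0+} f(s); equivalently, ( *D_{(k)} f)(t) = (k * f′)(t) for all t > 0. -/

import Mathlib

/-!
Writing `f = f(0) + ∫₀ f'`, commutativity and associativity of the Laplace convolution give
`k * f = f(0) ∫₀ k + ∫₀ (k * f')`, so everything follows from the fundamental theorem of calculus
once `k * f'` is known to be continuous on `(0, ∞)`. Each factor is singular at `0` only, so the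
convolution integral splits into three parts: near `τ = 0` the factor `k (t - τ)` is regular and
`f' τ` is integrable, near `τ = t` the roles are exchanged, and in between both are continuous.
-/

open Real Filter MeasureTheory intervalIntegral

/-- The Laplace convolution `(f * g)(t) = ∫_0^t f(t-τ) g(τ) dτ`. -/
noncomputable def lconv (f g : ℝ → ℝ) : ℝ → ℝ :=
  fun t => ∫ τ in (0:ℝ)..t, f (t - τ) * g τ

/-- The space `C_{-1}(0,∞)`: functions representable as `t^p f₁(t)` with `p > -1`
and `f₁` continuous on `[0,∞)`. -/
def CMinusOne (f : ℝ → ℝ) : Prop :=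
  ∃ p : ℝ, p > -1 ∧ ∃ f₁ : ℝ → ℝ, ContinuousOn f₁ (Set.Ici 0) ∧
    ∀ t > (0:ℝ), f t = t ^ p * f₁ t

lemma CMinusOne.continuousOn {f : ℝ → ℝ} (hf : CMinusOne f) : ContinuousOn f (Set.Ioi 0) := by
  obtain ⟨p, -, f₁, hf₁, hrep⟩ := hf
  have hpow : ContinuousOn (fun t : ℝ => t ^ p) (Set.Ioi 0) :=
    continuousOn_id.rpow_const fun t ht => Or.inl (ne_of_gt ht)
  exact (hpow.mul (hf₁.mono Set.Ioi_subset_Ici_self)).congr hrep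

lemma CMinusOne.intervalIntegrable {f : ℝ → ℝ} (hf : CMinusOne f) {t : ℝ} (ht : 0 < t) :
    IntervalIntegrable f volume 0 t := by
  obtain ⟨p, hp, f₁, hf₁, hrep⟩ := hf
  have hcont : ContinuousOn f₁ (Set.uIcc 0 t) :=
    hf₁.mono fun s hs => (Set.uIcc_of_le ht.le ▸ hs).1
  refine ((intervalIntegrable_rpow' hp).mul_continuousOn hcont).congr_uIoo fun s hs => ?_
  rw [Set.uIoo_of_le ht.le] at hs
  exact (hrep s hs.1).symm

section PrimitivesAndTruncations

variable {E : Type*} [NormedAddCommGroup E] {f : ℝ → E} {a b : ℝ}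

lemma integrable_indicator_Ioc (hab : a ≤ b) (hf : IntervalIntegrable f volume a b) :
    Integrable ((Set.Ioc a b).indicator f) :=
  (integrable_indicator_iff measurableSet_Ioc).2
    ((intervalIntegrable_iff_integrableOn_Ioc_of_le hab).1 hf)

variable [NormedSpace ℝ E]

lemma integral_indicator_Ioc_comp_sub (f : ℝ → E) {x τ : ℝ} (hτ : τ ∈ Set.Icc 0 x) :
    ∫ s in 0..x, (Set.Ioc 0 x).indicator f (s - τ) = ∫ s in 0..(x - τ), f s := by
  rw [integral_comp_sub_right (fun s => (Set.Ioc 0 x).indicator f s), zero_sub,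
    integral_of_le (by linarith [hτ.1, hτ.2]), integral_of_le (sub_nonneg.2 hτ.2),
    setIntegral_indicator measurableSet_Ioc, Set.Ioc_inter_Ioc,
    max_eq_right (neg_nonpos.2 hτ.1), min_eq_left (sub_le_self x hτ.1)]

lemma hasDerivAt_integral_of_continuousOn_Ioi [CompleteSpace E]
    (hf : ContinuousOn f (Set.Ioi a)) (hab : a < b) (hfi : IntervalIntegrable f volume a b) :
    HasDerivAt (fun x => ∫ s in a..x, f s) (f b) b :=
  integral_hasDerivAt_right hfi (hf.stronglyMeasurableAtFilter isOpen_Ioi b hab)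
    (hf.continuousAt (Ioi_mem_nhds hab))

lemma eq_add_integral_of_tendsto [CompleteSpace E] {f' : ℝ → E} {f0 : E} (hab : a < b)
    (hf : ∀ t > a, HasDerivAt f (f' t) t) (hf' : IntervalIntegrable f' volume a b)
    (hf0 : Tendsto f (nhdsWithin a (Set.Ioi a)) (nhds f0)) : f b = f0 + ∫ s in a..b, f' s := by
  rw [integral_eq_sub_of_hasDerivAt_of_tendsto hab (fun s hs => hf s hs.1) hf' hf0
    ((hf b hab).continuousAt.tendsto.mono_left nhdsWithin_le_nhds), add_sub_cancel]

end PrimitivesAndTruncations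

section Convolution

variable {f g : ℝ → ℝ} {x : ℝ}

lemma lconv_comm (f g : ℝ → ℝ) : lconv f g = lconv g f := by
  ext x
  simpa [lconv, mul_comm] using
    (integral_comp_sub_left (a := 0) (b := x) (fun τ => g (x - τ) * f τ) x)

lemma lconv_congr_left {f₁ f₂ : ℝ → ℝ} (g : ℝ → ℝ) (hx : 0 ≤ x)
    (h : Set.EqOn f₁ f₂ (Set.Ioo 0 x)) : lconv f₁ g x = lconv f₂ g x := by
  refine integral_congr_Ioo_of_le hx fun τ hτ => ?_
  simp only [h (show x - τ ∈ Set.Ioo 0 x from ⟨sub_pos.2 hτ.2, sub_lt_self x hτ.1⟩)]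

lemma lconv_eq_convolution_indicator (f g : ℝ → ℝ) {T : ℝ} (hx : x ∈ Set.Icc 0 T) :
    lconv f g x = convolution ((Set.Ioc 0 T).indicator g) ((Set.Ioc 0 T).indicator f)
      (ContinuousLinearMap.mul ℝ ℝ) volume x := by
  have hsupport (τ : ℝ) : (Set.Ioo 0 x).indicator (fun τ => f (x - τ) * g τ) τ =
      (Set.Ioc 0 T).indicator g τ * (Set.Ioc 0 T).indicator f (x - τ) := by
    simp only [Set.indicator_apply, Set.mem_Ioo, Set.mem_Ioc]
    grind
  simp only [convolution, ContinuousLinearMap.mul_apply', ← hsupport, lconv]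
  rw [integral_of_le hx.1, integral_Ioc_eq_integral_Ioo,
    MeasureTheory.integral_indicator measurableSet_Ioo]

lemma intervalIntegrable_lconv (hx : 0 ≤ x) (hf : IntervalIntegrable f volume 0 x)
    (hg : IntervalIntegrable g volume 0 x) : IntervalIntegrable (lconv f g) volume 0 x := by
  have hconv := ((integrable_indicator_Ioc hx hg).integrable_convolution
    (ContinuousLinearMap.mul ℝ ℝ) (integrable_indicator_Ioc hx hf)).intervalIntegrable
    (a := 0) (b := x)
  refine hconv.congr_uIoo fun s hs => ?_
  rw [Set.uIoo_of_le hx] at hs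
  exact (lconv_eq_convolution_indicator f g (Set.Ioo_subset_Icc_self hs)).symm

/- Convolution with the constant `1` is integration from `0`, so this is the associativity
`1 * (f * g) = (1 * f) * g`. -/
lemma integral_lconv (hx : 0 ≤ x) (hf : IntervalIntegrable f volume 0 x)
    (hg : IntervalIntegrable g volume 0 x) :
    ∫ s in 0..x, lconv f g s = lconv (fun y => ∫ s in 0..y, f s) g x := by
  set F := (Set.Ioc 0 x).indicator f
  set G := (Set.Ioc 0 x).indicator g with hG
  have hprod : Integrable (fun p : ℝ × ℝ => G p.2 * F (p.1 - p.2))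
      ((volume.restrict (Set.uIoc 0 x)).prod volume) :=
    ((integrable_indicator_Ioc hx hg).convolution_integrand
      (ContinuousLinearMap.mul ℝ ℝ) (integrable_indicator_Ioc hx hf)).mono_measure
      (Measure.prod_mono Measure.restrict_le_self le_rfl)
  have hinner (τ : ℝ) : ∫ s in 0..x, G τ * F (s - τ) =
      (Set.Ioc 0 x).indicator (fun τ => (∫ s in 0..(x - τ), f s) * g τ) τ := by
    rw [intervalIntegral.integral_const_mul]
    by_cases hτ : τ ∈ Set.Ioc 0 x
    · rw [integral_indicator_Ioc_comp_sub f (Set.Ioc_subset_Icc_self hτ), hG,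
        Set.indicator_of_mem hτ, Set.indicator_of_mem hτ, mul_comm]
    · rw [hG, Set.indicator_of_notMem hτ, Set.indicator_of_notMem hτ, zero_mul]
  calc ∫ s in 0..x, lconv f g s
      = ∫ s in 0..x, ∫ τ, G τ * F (s - τ) :=
        integral_congr_Ioo_of_le hx fun s hs =>
          lconv_eq_convolution_indicator f g (Set.Ioo_subset_Icc_self hs)
    _ = ∫ τ, ∫ s in 0..x, G τ * F (s - τ) := intervalIntegral_integral_swap hprod
    _ = lconv (fun y => ∫ s in 0..y, f s) g x := by
        simp only [hinner]
        rw [MeasureTheory.integral_indicator measurableSet_Ioc, lconv, integral_of_le hx]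

lemma lconv_const_add_primitive (c : ℝ) (hx : 0 ≤ x) (hf : IntervalIntegrable f volume 0 x)
    (hg : IntervalIntegrable g volume 0 x) :
    lconv (fun y => c + ∫ s in 0..y, f s) g x =
      c * (∫ s in 0..x, g s) + ∫ s in 0..x, lconv f g s := by
  have hprimitive : ContinuousOn (fun τ => ∫ s in 0..(x - τ), f s) (Set.uIcc 0 x) :=
    (continuousOn_primitive_interval' hf Set.left_mem_uIcc).comp (by fun_prop) fun τ hτ => by
      rw [Set.uIcc_of_le hx] at hτ ⊢
      exact ⟨sub_nonneg.2 hτ.2, sub_le_self x hτ.1⟩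
  rw [integral_lconv hx hf hg, lconv, lconv, ← intervalIntegral.integral_const_mul,
    ← intervalIntegral.integral_add (hg.const_mul c) (hg.continuousOn_mul hprimitive)]
  simp only [add_mul]

end Convolution

section Continuity

variable {f g : ℝ → ℝ} {b c t x : ℝ}

lemma intervalIntegrable_comp_sub_mul (hf : ContinuousOn f (Set.Ioi 0)) (hb : 0 ≤ b)
    (hbx : b < x) (hg : IntervalIntegrable g volume 0 b) :
    IntervalIntegrable (fun τ => f (x - τ) * g τ) volume 0 b := by
  refine hg.continuousOn_mul (hf.comp (by fun_prop) fun τ hτ => ?_)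
  rw [Set.uIcc_of_le hb] at hτ
  exact sub_pos.2 (hτ.2.trans_lt hbx)

lemma lconv_eq_add_integral (hf : ContinuousOn f (Set.Ioi 0)) (hg : ContinuousOn g (Set.Ioi 0))
    (hb : 0 < b) (hbx : b < x) (hfi : IntervalIntegrable f volume 0 (x - b))
    (hgi : IntervalIntegrable g volume 0 b) :
    lconv f g x = (∫ τ in 0..b, f (x - τ) * g τ) + ∫ τ in 0..(x - b), g (x - τ) * f τ := by
  have hleft := intervalIntegrable_comp_sub_mul hf hb.le hbx hgi
  have hright : IntervalIntegrable (fun τ => f (x - τ) * g τ) volume b x := by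
    have h := intervalIntegrable_comp_sub_mul hg (sub_pos.2 hbx).le (sub_lt_self x hb) hfi
    simpa [mul_comm] using (h.comp_sub_left x).symm
  have hreflect : ∫ τ in b..x, f (x - τ) * g τ = ∫ τ in 0..(x - b), g (x - τ) * f τ := by
    simpa [mul_comm] using
      integral_comp_sub_left (a := b) (b := x) (fun τ => g (x - τ) * f τ) x
  rw [lconv, ← integral_add_adjacent_intervals hleft hright, hreflect]

lemma continuousAt_integral_comp_sub_mul (hf : ContinuousOn f (Set.Ioi 0)) (hb : 0 ≤ b)
    (hbt : b < t) (hg : IntervalIntegrable g volume 0 b) :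
    ContinuousAt (fun x => ∫ τ in 0..b, f (x - τ) * g τ) t := by
  obtain ⟨a, hba, hat⟩ := exists_between hbt
  obtain ⟨d, htd⟩ := exists_gt t
  obtain ⟨M, hM⟩ := (isCompact_Icc (a := a - b) (b := d)).exists_bound_of_continuousOn
    (hf.mono fun s hs => (sub_pos.2 hba).trans_le hs.1)
  refine continuousAt_of_dominated_interval (bound := fun τ => M * ‖g τ‖) ?_ ?_
    (hg.norm.const_mul M) ?_
  · filter_upwards [lt_mem_nhds hbt] with x hx
    exact (intervalIntegrable_comp_sub_mul hf hb hx hg).aestronglyMeasurable_restrict_uIoc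
  · filter_upwards [Ioo_mem_nhds hat htd] with x hx
    refine Eventually.of_forall fun τ hτ => ?_
    rw [Set.uIoc_of_le hb] at hτ
    rw [norm_mul]
    gcongr
    exact hM _ ⟨by linarith [hx.1, hτ.2], by linarith [hx.2, hτ.1]⟩
  · refine Eventually.of_forall fun τ hτ => ContinuousAt.mul ?_ continuousAt_const
    rw [Set.uIoc_of_le hb] at hτ
    exact (hf.continuousAt (Ioi_mem_nhds (sub_pos.2 (hτ.2.trans_lt hbt)))).comp
      (f := fun x => x - τ) (by fun_prop)

lemma continuousAt_integral_comp_sub_mul_sub (hf : ContinuousOn f (Set.Ioi 0))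
    (hg : ContinuousOn g (Set.Ioi 0)) (hb : 0 < b) (hc : 0 < c) (hbc : b + c < t) :
    ContinuousAt (fun x => ∫ τ in c..(x - b), f (x - τ) * g τ) t := by
  have hfb : Continuous fun s => f (max b s) :=
    hf.comp_continuous (by fun_prop) fun s => hb.trans_le (le_max_left b s)
  have hgc : Continuous fun s => g (max c s) :=
    hg.comp_continuous (by fun_prop) fun s => hc.trans_le (le_max_left c s)
  have hextended : Continuous fun x => ∫ τ in c..(x - b), f (max b (x - τ)) * g (max c τ) :=
    continuous_parametric_intervalIntegral_of_continuous
      ((hfb.comp (by fun_prop)).mul (hgc.comp (by fun_prop))) (by fun_prop)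
  refine hextended.continuousAt.congr ?_
  filter_upwards [lt_mem_nhds hbc] with x hx
  refine integral_congr_Ioo_of_le (by linarith) fun τ hτ => ?_
  simp only [max_eq_right hτ.1.le, max_eq_right (show b ≤ x - τ by linarith [hτ.2])]

lemma continuousOn_lconv (hf : ContinuousOn f (Set.Ioi 0))
    (hfi : ∀ t > 0, IntervalIntegrable f volume 0 t) (hg : ContinuousOn g (Set.Ioi 0))
    (hgi : ∀ t > 0, IntervalIntegrable g volume 0 t) :
    ContinuousOn (lconv f g) (Set.Ioi 0) := by
  refine continuousOn_of_forall_continuousAt fun t (ht : 0 < t) => ?_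
  set b := t / 3 with hb_def
  have hb : 0 < b := by positivity
  have hbt : b < t := by linarith
  have hsum := ((continuousAt_integral_comp_sub_mul hf hb.le hbt (hgi b hb)).add
    (continuousAt_integral_comp_sub_mul hg hb.le hbt (hfi b hb))).add
    (continuousAt_integral_comp_sub_mul_sub hg hf hb hb (by linarith : b + b < t))
  refine hsum.congr ?_
  filter_upwards [lt_mem_nhds (by linarith : b + b < t)] with x hx
  have hmiddle : IntervalIntegrable (fun τ => g (x - τ) * f τ) volume 0 (x - b) :=
    intervalIntegrable_comp_sub_mul hg (by linarith) (by linarith) (hfi _ (by linarith))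
  have hb_mem : b ∈ Set.uIcc 0 (x - b) := by
    rw [Set.uIcc_of_le (by linarith)]
    exact ⟨hb.le, by linarith⟩
  rw [lconv_eq_add_integral hf hg hb (by linarith) (hfi _ (by linarith)) (hgi b hb),
    ← integral_add_adjacent_intervals (hmiddle.mono_set (Set.uIcc_subset_uIcc_left hb_mem))
      (hmiddle.mono_set (Set.uIcc_subset_uIcc_right hb_mem)), ← add_assoc]
  rfl

end Continuity

theorem caputo_GFD_representation_general {k f f' : ℝ → ℝ} {f0 t : ℝ}
    (hk : ContinuousOn k (Set.Ioi 0)) (hki : ∀ x > 0, IntervalIntegrable k volume 0 x)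
    (hf : ∀ x > 0, HasDerivAt f (f' x) x)
    (hf0 : Tendsto f (nhdsWithin 0 (Set.Ioi 0)) (nhds f0))
    (hf' : ContinuousOn f' (Set.Ioi 0)) (hf'i : ∀ x > 0, IntervalIntegrable f' volume 0 x)
    (ht : 0 < t) : HasDerivAt (lconv k f) (lconv k f' t + f0 * k t) t := by
  have hrep : ∀ x > 0, lconv k f x = (∫ s in 0..x, lconv k f' s) + f0 * ∫ s in 0..x, k s := by
    intro x hx
    rw [lconv_comm k f, lconv_comm k f', add_comm,
      ← lconv_const_add_primitive f0 hx.le (hf'i x hx) (hki x hx)]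
    exact lconv_congr_left k hx.le fun y hy =>
      eq_add_integral_of_tendsto hy.1 hf (hf'i y hy.1) hf0
  have hderiv_conv : HasDerivAt (fun x => ∫ s in 0..x, lconv k f' s) (lconv k f' t) t :=
    hasDerivAt_integral_of_continuousOn_Ioi (continuousOn_lconv hk hki hf' hf'i) ht
      (intervalIntegrable_lconv ht.le (hki t ht) (hf'i t ht))
  have hderiv_kernel : HasDerivAt (fun x => ∫ s in 0..x, k s) (k t) t :=
    hasDerivAt_integral_of_continuousOn_Ioi hk ht (hki t ht)
  exact (hderiv_conv.add (hderiv_kernel.const_mul f0)).congr_of_eventuallyEq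
    (eventually_of_mem (Ioi_mem_nhds ht) hrep)

/-- Representation of the Caputo-type GFD for differentiable functions: for
`k ∈ C_{-1}(0,∞)` and `f ∈ C¹_{-1}(0,∞)` (i.e. `f ∈ C_{-1}(0,∞)` differentiable on
`(0,∞)` with continuous extension `f(0) = lim_{s→0+} f(s)` and `f′ ∈ C_{-1}(0,∞)`),
for every `t > 0` the function `k * f` is differentiable at `t` with
`d/dt (k * f)(t) = (k * f′)(t) + f(0) k(t)`; equivalently
`( *D_{(k)} f)(t) = (k * f′)(t)` for all `t > 0`. -/
theorem caputo_GFD_representation (k f : ℝ → ℝ) (f0 : ℝ) (hk : CMinusOne k)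
    (hf : CMinusOne f) (hdiff : ∀ t > (0:ℝ), DifferentiableAt ℝ f t)
    (hf0 : Tendsto f (nhdsWithin 0 (Set.Ioi 0)) (nhds f0))
    (hder : CMinusOne (deriv f)) :
    ∀ t > (0:ℝ), HasDerivAt (lconv k f) (lconv k (deriv f) t + f0 * k t) t :=
  fun _ ht => caputo_GFD_representation_general hk.continuousOn (fun _ => hk.intervalIntegrable)
    (fun s hs => (hdiff s hs).hasDerivAt) hf0 hder.continuousOn
    (fun _ => hder.intervalIntegrable) ht
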